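/- Every finite insoluble group has order divisible by at least three distinct primes. -/

import Mathlib

/-!
Let `g ≠ 1` in a finite group and let `p` be a prime. The character of the regular representation
vanishes at `g`, and the trivial representation contributes `1` to it, so the other irreducible
characters satisfy `∑ χ(1) χ(g) = -1`. Since `-1 / p` is not an algebraic integer, some nontrivial
irreducible `χ` has `p ∤ χ(1)` and `χ(g) ≠ 0`. If the class of `g` has `p ^ a` elements, then
`p ^ a χ(g) / χ(1)` is an algebraic integer (the scalar by which the class sum acts), hence so is
`χ(g) / χ(1)`. This is an average of roots of unity, and by Kronecker's theorem it can be a nonzero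
algebraic integer only if those roots of unity coincide, that is, if `g` acts as a scalar. In a
simple group `g` is then central. When at most two primes divide the order of a simple group, a
nontrivial central element of a Sylow subgroup has a class of prime power size, so the group has
nontrivial center and is abelian.
-/

theorem isUnit_of_algebraMap_mul_eq_one {R S : Type*} [CommRing R] [CommRing S] [Algebra R S]
    [FaithfulSMul R S] {x : R} {t : S} (ht : IsIntegral R t) (h : algebraMap R S x * t = 1) :
    IsUnit x :=
  have : FaithfulSMul R (integralClosure R S) :=
    (faithfulSMul_iff_algebraMap_injective _ _).2 <|
      .of_comp (f := Subtype.val) (FaithfulSMul.algebraMap_injective R S)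
  isUnit_of_map_unit (algebraMap R (integralClosure R S)) x
    (.of_mul_eq_one ⟨t, ht⟩ (Subtype.ext h))

theorem multiset_sum_eq_card_smul_of_norm_sum_eq_card {E : Type*} [NormedAddCommGroup E]
    [NormedSpace ℝ E] [StrictConvexSpace ℝ E] {s : Multiset E} (hs : ∀ z ∈ s, ‖z‖ = 1)
    (hsum : ‖s.sum‖ = s.card) {z : E} (hz : z ∈ s) : s.sum = s.card • z := by
  obtain ⟨t, rfl⟩ := Multiset.exists_cons_of_mem hz
  have hz1 : ‖z‖ = 1 := hs z (Multiset.mem_cons_self z t)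
  have ht : ‖t.sum‖ ≤ t.card := by
    have hmap : t.map (‖·‖) = t.map fun _ ↦ (1 : ℝ) :=
      Multiset.map_congr rfl fun w hw ↦ hs w (Multiset.mem_cons_of_mem hw)
    simpa [hmap] using norm_multiset_sum_le t
  rw [Multiset.sum_cons, Multiset.card_cons, Nat.cast_add_one] at hsum
  have htri := norm_add_le z t.sum
  have hnorm : ‖t.sum‖ = t.card := by linarith
  have hray : SameRay ℝ z t.sum := sameRay_iff_norm_add.2 (by linarith)
  have htsum : t.sum = t.card • z := by
    simpa [hz1, hnorm, Nat.cast_smul_eq_nsmul] using hray.norm_smul_eq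
  rw [Multiset.sum_cons, Multiset.card_cons, htsum, succ_nsmul']

theorem sum_eq_zero_or_forall_eq_sum_div_card_of_numberField {K : Type*} [Field K]
    [NumberField K] {n : ℕ} (hn : n ≠ 0) {s : Multiset K} (hs : ∀ z ∈ s, z ^ n = 1)
    (hint : IsIntegral ℤ (s.sum / s.card)) :
    s.sum = 0 ∨ ∀ z ∈ s, z = s.sum / s.card := by
  refine or_iff_not_imp_left.2 fun hsum z hz ↦ ?_
  have hcard : 0 < s.card := Multiset.card_pos_iff_exists_mem.2 ⟨z, hz⟩
  have hnorm (φ : K →+* ℂ) : ∀ w ∈ s.map φ, ‖w‖ = 1 := by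
    simp only [Multiset.mem_map, forall_exists_index, and_imp, forall_apply_eq_imp_iff₂]
    intro w hw
    exact Complex.norm_eq_one_of_pow_eq_one (by rw [← map_pow, hs w hw, map_one]) hn
  have hφ (φ : K →+* ℂ) : ‖φ (s.sum / s.card)‖ = ‖(s.map φ).sum‖ / s.card := by
    rw [map_div₀, map_natCast, map_multiset_sum, norm_div, Complex.norm_natCast]
  have hle (φ : K →+* ℂ) : ‖φ (s.sum / s.card)‖ ≤ 1 := by
    rw [hφ, div_le_one (by exact_mod_cast hcard)]
    simpa [Multiset.map_congr rfl (hnorm φ)] using norm_multiset_sum_le (s.map φ)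
  obtain ⟨m, hm, hpow⟩ := NumberField.Embeddings.pow_eq_one_of_norm_le_one K ℂ
    (div_ne_zero hsum (by exact_mod_cast hcard.ne')) hint hle
  obtain ⟨φ⟩ : Nonempty (K →+* ℂ) := inferInstance
  have hone : ‖φ (s.sum / s.card)‖ = 1 :=
    Complex.norm_eq_one_of_pow_eq_one (by rw [← map_pow, hpow, map_one]) hm.ne'
  rw [hφ, div_eq_one_iff_eq (by exact_mod_cast hcard.ne')] at hone
  have key := multiset_sum_eq_card_smul_of_norm_sum_eq_card (hnorm φ) (by simpa using hone)
    (Multiset.mem_map_of_mem φ hz)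
  rw [← map_multiset_sum, Multiset.card_map, ← map_nsmul] at key
  rw [φ.injective key, nsmul_eq_mul, mul_div_cancel_left₀ _ (by exact_mod_cast hcard.ne')]

theorem sum_eq_zero_or_forall_eq_sum_div_card {F : Type*} [Field F] [CharZero F] {n : ℕ}
    (hn : n ≠ 0) {s : Multiset F} (hs : ∀ z ∈ s, z ^ n = 1) (hint : IsIntegral ℤ (s.sum / s.card)) :
    s.sum = 0 ∨ ∀ z ∈ s, z = s.sum / s.card := by
  obtain ⟨K, _, hK⟩ : ∃ K : IntermediateField ℚ F, NumberField K ∧ ∀ z ∈ s, z ∈ K := by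
    classical
    let K := IntermediateField.adjoin ℚ (s.toFinset : Set F)
    have : FiniteDimensional ℚ K := IntermediateField.finiteDimensional_adjoin fun z hz ↦
      .of_pow (Nat.pos_of_ne_zero hn) (by simp [hs z (by simpa using hz), isIntegral_one])
    exact ⟨K, ⟨⟩, fun z hz ↦ IntermediateField.subset_adjoin ℚ _ (by simpa using hz)⟩
  lift s to Multiset K using hK
  have hcoe : (s.map (↑)).sum / ((s.map ((↑) : K → F)).card : F) =
      algebraMap K F (s.sum / s.card) := by
    rw [Multiset.card_map, map_div₀, map_natCast, map_multiset_sum]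
    rfl
  rw [hcoe, isIntegral_algebraMap_iff (algebraMap K F).injective] at hint
  have hpow : ∀ z ∈ s, z ^ n = 1 := fun z hz ↦
    Subtype.ext (by simpa using hs z (Multiset.mem_map_of_mem _ hz))
  rw [hcoe]
  refine (sum_eq_zero_or_forall_eq_sum_div_card_of_numberField hn hpow hint).imp
    (fun h ↦ ?_) fun h ↦ ?_
  · simpa using congrArg (algebraMap K F) h
  · exact Multiset.forall_mem_map_iff.2 fun z hz ↦ congrArg (algebraMap K F) (h z hz)

section FiniteOrder

open Polynomial

variable {k n : Type*} [Field k] [Fintype n] [DecidableEq n]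

theorem aeval_eq_zero_of_mem_roots_charpoly {R : Type*} [CommRing R] [Algebra R k]
    {M : Matrix n n k} {f : R[X]} (hf : aeval M f = 0) {z : k} (hz : z ∈ M.charpoly.roots) :
    aeval z f = 0 := by
  obtain _ | _ := isEmpty_or_nonempty n
  · simp [Matrix.charpoly] at hz
  have hmem : eval z (f.map (algebraMap R k)) ∈ spectrum k (aeval M (f.map (algebraMap R k))) :=
    spectrum.subset_polynomial_aeval M _
      ⟨z, Matrix.mem_spectrum_of_isRoot_charpoly (isRoot_of_mem_roots hz), rfl⟩
  rwa [aeval_map_algebraMap, hf, spectrum.zero_eq, Set.mem_singleton_iff,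
    eval_map_algebraMap] at hmem

theorem pow_eq_one_of_mem_roots_charpoly {M : Matrix n n k} {m : ℕ} (hM : M ^ m = 1)
    {z : k} (hz : z ∈ M.charpoly.roots) : z ^ m = 1 := by
  have h := aeval_eq_zero_of_mem_roots_charpoly (f := (X ^ m - 1 : k[X])) (by simp [hM]) hz
  simpa [sub_eq_zero] using h

theorem isIntegral_matrixTrace [IsAlgClosed k] {R : Type*} [CommRing R] [Algebra R k]
    {M : Matrix n n k} (hM : IsIntegral R M) : IsIntegral R M.trace := by
  rw [Matrix.trace_eq_sum_roots_charpoly]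
  obtain ⟨f, hmonic, hf⟩ := hM
  exact .multiset_sum fun z hz ↦ ⟨f, hmonic, aeval_eq_zero_of_mem_roots_charpoly hf hz⟩

theorem eq_algebraMap_of_pow_eq_one {M : Matrix n n k} {m : ℕ} [NeZero (m : k)]
    (hM : M ^ m = 1) {c : k} {d : ℕ} (hc : M.charpoly ∣ (X - C c) ^ d) :
    M = algebraMap k _ c := by
  have hsq : Squarefree (minpoly k M) :=
    (X_pow_sub_one_separable_iff.2 (NeZero.ne (m : k))).squarefree.squarefree_of_dvd
      (minpoly.dvd k M (by simp [hM]))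
  have hdvd : minpoly k M ∣ X - C c :=
    hsq.isRadical d _ ((Matrix.minpoly_dvd_charpoly M).trans hc)
  simpa [sub_eq_zero] using aeval_eq_zero_of_dvd_aeval_eq_zero hdvd (minpoly.aeval k M)

theorem trace_eq_zero_or_eq_algebraMap [IsAlgClosed k] [CharZero k]
    {M : Matrix n n k} {m : ℕ} (hm : m ≠ 0) (hM : M ^ m = 1)
    (hint : IsIntegral ℤ (M.trace / Fintype.card n)) :
    M.trace = 0 ∨ M = algebraMap k _ (M.trace / Fintype.card n) := by
  have : NeZero (m : k) := ⟨by exact_mod_cast hm⟩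
  have hsplits := IsAlgClosed.splits M.charpoly
  have hcard : M.charpoly.roots.card = Fintype.card n := by
    rw [← hsplits.natDegree_eq_card_roots, Matrix.charpoly_natDegree_eq_dim]
  rw [Matrix.trace_eq_sum_roots_charpoly, ← hcard] at hint ⊢
  refine (sum_eq_zero_or_forall_eq_sum_div_card hm
    (fun z ↦ pow_eq_one_of_mem_roots_charpoly hM) hint).imp_right fun h ↦
      eq_algebraMap_of_pow_eq_one hM (d := M.charpoly.roots.card) (dvd_of_eq ?_)
  conv_lhs => rw [hsplits.eq_prod_roots_of_monic M.charpoly_monic,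
    Multiset.eq_replicate_card.2 h]
  simp

end FiniteOrder

section RegularTrace

variable (R : Type*) [CommRing R]

/-- The trace of left multiplication by `x`, that is, the character of the regular representation
of `A`; this is `Algebra.trace` without the commutativity of `A`. -/
noncomputable def regularTrace {A : Type*} [Ring A] [Algebra R A] (x : A) : R :=
  LinearMap.trace R A (LinearMap.mulLeft R x)

theorem regularTrace_eq_sum_repr {A ι : Type*} [Ring A] [Algebra R A] [Fintype ι]
    (b : Module.Basis ι R A) (x : A) : regularTrace R x = ∑ i, b.repr (x * b i) i := by
  classical
  simp [regularTrace, LinearMap.trace_eq_matrix_trace R b, Matrix.trace,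
    Algebra.leftMulMatrix_eq_repr_mul]

theorem regularTrace_algEquiv {A B : Type*} [Ring A] [Ring B] [Algebra R A] [Algebra R B]
    (e : A ≃ₐ[R] B) (x : A) : regularTrace R (e x) = regularTrace R x := by
  rw [regularTrace, regularTrace, ← LinearMap.trace_conj' _ e.toLinearEquiv]
  congr 1
  ext y
  simp [LinearEquiv.conj_apply]

theorem regularTrace_pi {ι : Type*} [Fintype ι] {A : ι → Type*} [∀ i, Ring (A i)]
    [∀ i, Algebra R (A i)] [∀ i, Module.Free R (A i)] [∀ i, Module.Finite R (A i)]
    (x : ∀ i, A i) : regularTrace R x = ∑ i, regularTrace R (x i) := by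
  classical
  let b (i : ι) := Module.Free.chooseBasis R (A i)
  simp [regularTrace_eq_sum_repr R (Pi.basis b), fun i ↦ regularTrace_eq_sum_repr R (b i),
    Fintype.sum_sigma]

theorem regularTrace_matrix {n : Type*} [Fintype n] [DecidableEq n] (M : Matrix n n R) :
    regularTrace R M = Fintype.card n * M.trace := by
  have hrepr (i j : n) : (Matrix.stdBasis R n n).repr (M * Matrix.stdBasis R n n (i, j)) (i, j) =
      M i i := by
    rw [Matrix.stdBasis_eq_single]
    simp [Matrix.stdBasis]
  simp [regularTrace_eq_sum_repr R (Matrix.stdBasis R n n), Matrix.trace, Finset.mul_sum,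
    Fintype.sum_prod_type, hrepr]

theorem regularTrace_monoidAlgebra_of {G : Type*} [Group G] [Finite G] [DecidableEq G] (g : G) :
    regularTrace R (MonoidAlgebra.of R G g) = if g = 1 then (Nat.card G : R) else 0 := by
  have := Fintype.ofFinite G
  have hmul (h : G) : MonoidAlgebra.of R G g * MonoidAlgebra.basis G R h =
      MonoidAlgebra.basis G R (g * h) := by
    simp [MonoidAlgebra.single_mul_single]
  simp [regularTrace_eq_sum_repr R (MonoidAlgebra.basis G R), hmul, Finsupp.single_apply,
    -MonoidAlgebra.basis_apply, -MonoidAlgebra.of_apply]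

end RegularTrace

theorem commute_sum_of_conj_mem {G A : Type*} [Group G] [Semiring A] (ρ : G →* A) {S : Finset G}
    (hS : ∀ g, ∀ x ∈ S, g * x * g⁻¹ ∈ S) (g : G) : Commute (ρ g) (∑ x ∈ S, ρ x) := by
  rw [Commute, SemiconjBy, Finset.mul_sum, Finset.sum_mul]
  refine Finset.sum_bij' (fun x _ ↦ g * x * g⁻¹) (fun x _ ↦ g⁻¹ * x * g) (hS g)
    (fun x hx ↦ by simpa using hS g⁻¹ x hx) ?_ ?_ ?_ <;> simp [mul_assoc, ← map_mul]

theorem isIntegral_sum_map {R G A : Type*} [CommRing R] [Monoid G] [Finite G] [Ring A]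
    [Algebra R A] (ρ : G →* A) (S : Finset G) : IsIntegral R (∑ x ∈ S, ρ x) := by
  have h := (IsIntegral.of_finite R (∑ x ∈ S, MonoidAlgebra.of R G x)).map
    (MonoidAlgebra.lift R A G ρ)
  simpa using h

section MatrixRepresentation

variable {k n G : Type*} [Field k] [Fintype n] [DecidableEq n]

theorem isIntegral_trace_map [IsAlgClosed k] {R : Type*} [CommRing R] [Algebra R k] [Monoid G]
    [Finite G] (ρ : G →* Matrix n n k) (g : G) : IsIntegral R (ρ g).trace :=
  isIntegral_matrixTrace (by simpa using isIntegral_sum_map (R := R) ρ {g})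

/-- A matrix representation whose image spans the full matrix algebra. By Burnside's theorem on
matrix algebras this is irreducibility over every extension of `k`, except that degree `0` is
allowed here. -/
def IsAbsolutelyIrreducible [Monoid G] (ρ : G →* Matrix n n k) : Prop :=
  Algebra.adjoin k (Set.range ρ) = ⊤

theorem isAbsolutelyIrreducible_of_surjective [Monoid G]
    {φ : MonoidAlgebra k G →ₐ[k] Matrix n n k} (hφ : Function.Surjective φ) :
    IsAbsolutelyIrreducible ((MonoidAlgebra.lift k (Matrix n n k) G).symm φ) := by
  refine top_unique fun M _ ↦ ?_
  obtain ⟨a, rfl⟩ := hφ M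
  induction a using MonoidAlgebra.induction_on with
  | of g => exact Algebra.subset_adjoin ⟨g, rfl⟩
  | add a b ha hb => exact map_add φ a b ▸ add_mem (ha trivial) (hb trivial)
  | smul r a ha => exact map_smul φ r a ▸ Subalgebra.smul_mem _ (ha trivial) r

namespace IsAbsolutelyIrreducible

theorem exists_eq_algebraMap_of_forall_commute [Monoid G] {ρ : G →* Matrix n n k}
    (hρ : IsAbsolutelyIrreducible ρ) {M : Matrix n n k} (hM : ∀ g, Commute (ρ g) M) :
    ∃ c, M = algebraMap k _ c := by
  have hcenter : M ∈ Subalgebra.center k (Matrix n n k) :=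
    Subalgebra.mem_center_iff.2 fun N ↦
      (Algebra.commute_of_mem_adjoin_of_forall_mem_commute (hρ ▸ Algebra.mem_top (x := N))
        (Set.forall_mem_range.2 fun g ↦ (hM g).symm)).symm
  exact (Algebra.IsCentral.mem_center_iff k).1 hcenter

variable [Group G] {ρ : G →* Matrix n n k}

theorem sum_trace_eq_zero [Fintype G] (hρ : IsAbsolutelyIrreducible ρ) (hne : ρ ≠ 1) :
    ∑ g, (ρ g).trace = 0 := by
  obtain ⟨c, hc⟩ := hρ.exists_eq_algebraMap_of_forall_commute
    (commute_sum_of_conj_mem ρ (S := Finset.univ) (by simp))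
  obtain ⟨g, hg⟩ := DFunLike.ne_iff.1 hne
  have hfix : ρ g * ∑ x, ρ x = ∑ x, ρ x := by
    simp_rw [Finset.mul_sum, ← map_mul]
    exact Fintype.sum_equiv (Equiv.mulLeft g) _ _ fun _ ↦ rfl
  rw [hc, Algebra.algebraMap_eq_smul_one, mul_smul_comm, mul_one] at hfix
  have hc0 : c = 0 := by
    have h : c • (ρ g - 1) = 0 := by rw [smul_sub, hfix, sub_self]
    exact (smul_eq_zero.1 h).resolve_right (sub_ne_zero.2 hg)
  rw [← Matrix.trace_sum, hc, hc0, map_zero, Matrix.trace_zero]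

theorem exists_isIntegral_card_mul_eq [Finite G] [Nonempty n] (hρ : IsAbsolutelyIrreducible ρ)
    (g : G) : ∃ c : k, IsIntegral ℤ c ∧
      Fintype.card n * c = (conjugatesOf g).ncard * (ρ g).trace := by
  classical
  have := Fintype.ofFinite G
  let S := (conjugatesOf g).toFinset
  have hmem {x : G} : x ∈ S ↔ IsConj g x := by rw [Set.mem_toFinset]; rfl
  obtain ⟨c, hc⟩ := hρ.exists_eq_algebraMap_of_forall_commute (commute_sum_of_conj_mem ρ (S := S)
    fun h x hx ↦ hmem.2 ((hmem.1 hx).trans (isConj_iff.2 ⟨h, rfl⟩)))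
  refine ⟨c, ?_, ?_⟩
  · rw [← isIntegral_algebraMap_iff (algebraMap k (Matrix n n k)).injective, ← hc]
    exact isIntegral_sum_map ρ S
  · have htrace : ∀ x ∈ S, (ρ x).trace = (ρ g).trace := fun x hx ↦ by
      obtain ⟨h, rfl⟩ := isConj_iff.1 (hmem.1 hx)
      rw [map_mul, map_mul, Matrix.trace_mul_comm, ← mul_assoc, ← map_mul, inv_mul_cancel,
        map_one, one_mul]
    calc Fintype.card n * c = (algebraMap k (Matrix n n k) c).trace := by
          simp [Matrix.algebraMap_eq_diagonal]
      _ = ∑ x ∈ S, (ρ x).trace := by rw [← hc, Matrix.trace_sum]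
      _ = (conjugatesOf g).ncard * (ρ g).trace := by
          rw [Finset.sum_congr rfl htrace, Finset.sum_const, nsmul_eq_mul,
            Set.ncard_eq_toFinset_card']

theorem trace_eq_zero_or_eq_algebraMap_of_coprime [IsAlgClosed k] [CharZero k] [Finite G]
    (hρ : IsAbsolutelyIrreducible ρ) {g : G}
    (hg : (Fintype.card n).Coprime (conjugatesOf g).ncard) :
    (ρ g).trace = 0 ∨ ρ g = algebraMap k _ ((ρ g).trace / Fintype.card n) := by
  obtain _ | _ := isEmpty_or_nonempty n
  · exact .inl (by simp)
  obtain ⟨c, hc, hcard⟩ := hρ.exists_isIntegral_card_mul_eq g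
  refine trace_eq_zero_or_eq_algebraMap (m := Nat.card G) Nat.card_pos.ne'
    (by rw [← map_pow, pow_card_eq_one', map_one]) ?_
  obtain ⟨a, b, hab⟩ := Nat.isCoprime_iff_coprime.2 hg
  have habk : (a : k) * Fintype.card n + b * (conjugatesOf g).ncard = 1 := by exact_mod_cast hab
  have hcomb : (ρ g).trace / Fintype.card n = a * (ρ g).trace + b * c := by
    rw [div_eq_iff (by simp)]
    linear_combination -(ρ g).trace * habk - b * hcard
  rw [hcomb]
  exact ((isIntegral_algebraMap (x := a)).mul (isIntegral_trace_map ρ g)).add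
    ((isIntegral_algebraMap (x := b)).mul hc)

end IsAbsolutelyIrreducible

end MatrixRepresentation

theorem exists_sum_card_mul_trace_eq (k G : Type*) [Field k] [IsAlgClosed k] [Group G] [Finite G]
    [DecidableEq G] [NeZero (Nat.card G : k)] :
    ∃ (m : ℕ) (d : Fin m → ℕ) (ρ : ∀ i, G →* Matrix (Fin (d i)) (Fin (d i)) k),
      (∀ i, IsAbsolutelyIrreducible (ρ i)) ∧
        ∀ g, ∑ i, d i * (ρ i g).trace = if g = 1 then (Nat.card G : k) else 0 := by
  obtain ⟨m, d, _, ⟨e⟩⟩ :=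
    IsSemisimpleRing.exists_algEquiv_pi_matrix_of_isAlgClosed k (MonoidAlgebra k G)
  let φ (i : Fin m) := (Pi.evalAlgHom k (fun i ↦ Matrix (Fin (d i)) (Fin (d i)) k) i).comp
    e.toAlgHom
  refine ⟨m, d, fun i ↦ (MonoidAlgebra.lift k _ G).symm (φ i), fun i ↦
    isAbsolutelyIrreducible_of_surjective ((Function.surjective_eval i).comp e.surjective),
    fun g ↦ ?_⟩
  rw [← regularTrace_monoidAlgebra_of, ← regularTrace_algEquiv k e, regularTrace_pi]
  simp_rw [regularTrace_matrix, Fintype.card_fin]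
  rfl

section RegularDecomposition

variable {k G ι : Type*} [Field k] [Group G] [Fintype ι] {n : ι → Type*} [∀ i, Fintype (n i)]
  [∀ i, DecidableEq (n i)] {ρ : ∀ i, G →* Matrix (n i) (n i) k}
  [DecidableEq G] [DecidablePred fun i ↦ ρ i = 1]

theorem sum_card_sq_filter_eq_one [Finite G] [NeZero (Nat.card G : k)]
    (hρ : ∀ i, IsAbsolutelyIrreducible (ρ i))
    (hreg : ∀ g, ∑ i, Fintype.card (n i) * (ρ i g).trace = if g = 1 then (Nat.card G : k) else 0) :
    ∑ i with ρ i = 1, (Fintype.card (n i) : k) ^ 2 = 1 := by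
  have := Fintype.ofFinite G
  have hsum (i : ι) : ∑ g, Fintype.card (n i) * (ρ i g).trace =
      Nat.card G * if ρ i = 1 then (Fintype.card (n i) : k) ^ 2 else 0 := by
    split_ifs with h
    · simp [h, sq]
    · rw [← Finset.mul_sum, (hρ i).sum_trace_eq_zero h, mul_zero, mul_zero]
  refine mul_left_cancel₀ (NeZero.ne (Nat.card G : k)) ?_
  calc (Nat.card G : k) * ∑ i with ρ i = 1, (Fintype.card (n i) : k) ^ 2
      = ∑ g, ∑ i, Fintype.card (n i) * (ρ i g).trace := by
        rw [Finset.sum_comm, Finset.sum_filter, Finset.mul_sum]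
        exact Finset.sum_congr rfl fun i _ ↦ (hsum i).symm
    _ = Nat.card G * 1 := by simp [hreg]

theorem sum_card_mul_trace_filter_eq_neg_one [Finite G] [NeZero (Nat.card G : k)]
    (hρ : ∀ i, IsAbsolutelyIrreducible (ρ i))
    (hreg : ∀ g, ∑ i, Fintype.card (n i) * (ρ i g).trace = if g = 1 then (Nat.card G : k) else 0)
    {g : G} (hg : g ≠ 1) :
    ∑ i with ρ i ≠ 1, Fintype.card (n i) * (ρ i g).trace = -1 := by
  have htriv : ∑ i with ρ i = 1, Fintype.card (n i) * (ρ i g).trace = 1 := by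
    rw [← sum_card_sq_filter_eq_one hρ hreg]
    refine Finset.sum_congr rfl fun i hi ↦ ?_
    simp [(Finset.mem_filter.1 hi).2, sq]
  have hsplit := Finset.sum_filter_add_sum_filter_not Finset.univ (fun i ↦ ρ i = 1)
    fun i ↦ Fintype.card (n i) * (ρ i g).trace
  rw [hreg, if_neg hg, htriv] at hsplit
  exact (neg_eq_of_add_eq_zero_right hsplit).symm

end RegularDecomposition

theorem exists_isAbsolutelyIrreducible_trace_ne_zero (k : Type*) {G : Type*} [Field k]
    [IsAlgClosed k] [CharZero k] [Group G] [Finite G] {g : G} (hg : g ≠ 1) {p : ℕ}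
    (hp : p.Prime) :
    ∃ (d : ℕ) (ρ : G →* Matrix (Fin d) (Fin d) k),
      IsAbsolutelyIrreducible ρ ∧ ρ ≠ 1 ∧ ¬ p ∣ d ∧ (ρ g).trace ≠ 0 := by
  classical
  have : NeZero (Nat.card G : k) := ⟨by exact_mod_cast Nat.card_pos.ne'⟩
  obtain ⟨m, d, ρ, hρ, hreg⟩ := exists_sum_card_mul_trace_eq k G
  by_contra! hzero
  have hterm (i : Fin m) (hi : ρ i ≠ 1) :
      (d i : k) * (ρ i g).trace = p * ((d i / p : ℕ) * (ρ i g).trace) := by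
    by_cases hdvd : p ∣ d i
    · rw [← mul_assoc, ← Nat.cast_mul, Nat.mul_div_cancel' hdvd]
    · simp [hzero (d i) (ρ i) (hρ i) hi hdvd]
  have hsum : (p : k) * ∑ i with ρ i ≠ 1, (d i / p : ℕ) * (ρ i g).trace = -1 := by
    rw [← sum_card_mul_trace_filter_eq_neg_one hρ (by simpa using hreg) hg, Finset.mul_sum]
    refine Finset.sum_congr rfl fun i hi ↦ ?_
    rw [Fintype.card_fin, hterm i (Finset.mem_filter.1 hi).2]
  have hint : IsIntegral ℤ (∑ i with ρ i ≠ 1, (d i / p : ℕ) * (ρ i g).trace) :=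
    .sum _ fun i _ ↦ (map_natCast (algebraMap ℤ k) _ ▸ isIntegral_algebraMap).mul
      (isIntegral_trace_map (ρ i) g)
  refine (Nat.prime_iff_prime_int.1 hp).not_isUnit
    (isUnit_of_algebraMap_mul_eq_one hint.neg ?_)
  rw [map_natCast, mul_neg, hsum, neg_neg]

theorem mem_center_of_ncard_conjugatesOf_eq_prime_pow {G : Type*} [Group G] [Finite G]
    [IsSimpleGroup G] {g : G} {p a : ℕ} (hp : p.Prime) (hcard : (conjugatesOf g).ncard = p ^ a) :
    g ∈ Subgroup.center G := by
  obtain rfl | hg := eq_or_ne g 1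
  · exact one_mem _
  obtain ⟨d, ρ, hρ, hne, hdvd, htrace⟩ := exists_isAbsolutelyIrreducible_trace_ne_zero ℂ hg hp
  have hcop : (Fintype.card (Fin d)).Coprime (conjugatesOf g).ncard := by
    rw [hcard, Fintype.card_fin]
    exact ((hp.coprime_iff_not_dvd.2 hdvd).pow_left a).symm
  have hscalar := (hρ.trace_eq_zero_or_eq_algebraMap_of_coprime hcop).resolve_left htrace
  have hinj : Function.Injective ρ := by
    refine (MonoidHom.ker_eq_bot_iff ρ).1 (ρ.normal_ker.eq_bot_or_eq_top.resolve_right ?_)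
    exact fun h ↦ hne (MonoidHom.ker_eq_top_iff.1 h)
  refine Subgroup.mem_center_iff.2 fun x ↦ hinj ?_
  rw [map_mul, map_mul, hscalar, Algebra.commutes]

theorem ncard_conjugatesOf_eq_index_centralizer {G : Type*} [Group G] (g : G) :
    (conjugatesOf g).ncard = (Subgroup.centralizer {g}).index := by
  have horbit : MulAction.orbit (ConjAct G) g = conjugatesOf g := by
    rw [ConjAct.orbit_eq_carrier_conjClasses]
    rfl
  rw [← horbit, ← MulAction.index_stabilizer, Subgroup.centralizer_eq_comap_stabilizer]
  exact (Subgroup.index_comap_of_surjective _ ConjAct.toConjAct.surjective).symm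

theorem exists_ne_one_not_dvd_ncard_conjugatesOf {G : Type*} [Group G] [Finite G] {p : ℕ}
    (hp : p.Prime) (hdvd : p ∣ Nat.card G) :
    ∃ g : G, g ≠ 1 ∧ ¬ p ∣ (conjugatesOf g).ncard := by
  have := Fact.mk hp
  let P : Sylow p G := default
  have : Nontrivial P := (Subgroup.nontrivial_iff_ne_bot _).2 (P.ne_bot_of_dvd_card hdvd)
  have := P.isPGroup'.center_nontrivial
  obtain ⟨⟨g, hg⟩, hne⟩ := exists_ne (1 : Subgroup.center P)
  have hle : (P : Subgroup G) ≤ Subgroup.centralizer {(g : G)} := fun x hx ↦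
    Subgroup.mem_centralizer_singleton_iff.2
      (congrArg Subtype.val (Subgroup.mem_center_iff.1 hg ⟨x, hx⟩))
  refine ⟨g, fun h ↦ hne (Subtype.ext (Subtype.ext h)), fun h ↦ P.not_dvd_index ?_⟩
  rw [ncard_conjugatesOf_eq_index_centralizer] at h
  exact h.trans (Subgroup.index_dvd_of_le hle)

theorem exists_eq_prime_pow_of_card_primeFactors_le_one {n : ℕ} (hn : n ≠ 0)
    (h : n.primeFactors.card ≤ 1) : ∃ p a : ℕ, p.Prime ∧ n = p ^ a := by
  obtain h0 | h1 : n.primeFactors.card = 0 ∨ n.primeFactors.card = 1 := by omega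
  · have hn1 : n = 1 := (Nat.primeFactors_eq_empty.1 (Finset.card_eq_zero.1 h0)).resolve_left hn
    exact ⟨2, 0, Nat.prime_two, hn1⟩
  · obtain ⟨p, a, hp, -, rfl⟩ := isPrimePow_iff_card_primeFactors_eq_one.2 h1
    exact ⟨p, a, hp.nat_prime, rfl⟩

theorem isSolvable_of_isSimpleGroup_of_card_primeFactors_le_two {G : Type*} [Group G] [Finite G]
    [IsSimpleGroup G] (h : (Nat.card G).primeFactors.card ≤ 2) : Group.IsSolvable G := by
  obtain ⟨p, hp, hpG⟩ := Nat.exists_prime_and_dvd (Finite.one_lt_card (α := G)).ne'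
  obtain ⟨g, hg, hpg⟩ := exists_ne_one_not_dvd_ncard_conjugatesOf hp hpG
  have hdvd : (conjugatesOf g).ncard ∣ Nat.card G :=
    ncard_conjugatesOf_eq_index_centralizer g ▸ Subgroup.index_dvd_card _
  have hsub : (conjugatesOf g).ncard.primeFactors ⊂ (Nat.card G).primeFactors := by
    refine Finset.ssubset_iff_subset_ne.2 ⟨Nat.primeFactors_mono hdvd Nat.card_pos.ne', ?_⟩
    exact fun heq ↦ hpg <| Nat.dvd_of_mem_primeFactors <| heq ▸
      Nat.mem_primeFactors.2 ⟨hp, hpG, Nat.card_pos.ne'⟩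
  obtain ⟨q, a, hq, hqa⟩ := exists_eq_prime_pow_of_card_primeFactors_le_one
    (ne_zero_of_dvd_ne_zero Nat.card_pos.ne' hdvd) (by have := Finset.card_lt_card hsub; omega)
  have hcenter : Subgroup.center G = ⊤ := by
    refine (Subgroup.center G).normal_of_characteristic.eq_bot_or_eq_top.resolve_left fun hbot ↦ ?_
    have hgc := mem_center_of_ncard_conjugatesOf_eq_prime_pow hq hqa
    exact hg (Subgroup.mem_bot.1 (hbot ▸ hgc))
  exact Group.isSolvable_of_comm fun x y ↦
    Subgroup.mem_center_iff.1 (hcenter ▸ Subgroup.mem_top y) x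

theorem isSolvable_of_card_primeFactors_le_two (G : Type*) [Group G] [Finite G]
    (h : (Nat.card G).primeFactors.card ≤ 2) : Group.IsSolvable G := by
  induction hn : Nat.card G using Nat.strong_induction_on generalizing G with | _ n ih
  obtain _ | _ := subsingleton_or_nontrivial G
  · infer_instance
  by_cases hsimple : IsSimpleGroup G
  · exact isSolvable_of_isSimpleGroup_of_card_primeFactors_le_two h
  obtain ⟨H, _, hbot, htop⟩ : ∃ H : Subgroup G, H.Normal ∧ H ≠ ⊥ ∧ H ≠ ⊤ := by
    by_contra! hall
    exact hsimple ⟨fun H hH ↦ or_iff_not_imp_left.2 (hall H hH)⟩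
  have hle {m : ℕ} (hm : m ∣ Nat.card G) : m.primeFactors.card ≤ 2 :=
    (Finset.card_le_card (Nat.primeFactors_mono hm Nat.card_pos.ne')).trans h
  have hquot : Nat.card (G ⧸ H) < Nat.card G := by
    rw [H.card_eq_card_quotient_mul_card_subgroup]
    exact lt_mul_of_one_lt_right Nat.card_pos ((Subgroup.one_lt_card_iff_ne_bot H).2 hbot)
  have hsubgp : Nat.card H < Nat.card G :=
    (Subgroup.card_le_card_group H).lt_of_ne fun heq ↦ htop (Subgroup.eq_top_of_card_eq H heq)
  exact (Group.isSolvable_iff_subgroup_quotient H).2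
    ⟨ih _ (hn ▸ hsubgp) H (hle H.card_subgroup_dvd_card) rfl,
      ih _ (hn ▸ hquot) (G ⧸ H) (hle H.card_quotient_dvd_card) rfl⟩

/-- Every finite insoluble group has order divisible by at least three distinct
primes. -/
theorem insoluble_three_prime_divisors (G : Type*) [Group G] [Finite G]
    (h : ¬ IsSolvable G) : 3 ≤ (Nat.card G).primeFactors.card := by
  by_contra! hlt
  exact h (isSolvable_of_card_primeFactors_le_two G (Nat.le_of_lt_succ hlt))
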